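/- Let A be a commutative unital K-algebra and L a (K, A)-Lie-Rinehart algebra. Then the exterior algebra ∧•_A L, equipped with the wedge product and the generalized Schouten–Nijenhuis bracket [D_1∧⋯∧D_m, D_{m+1}∧⋯∧D_n] = Σ_{i≤m<j} (−1)^{i+j+m} [D_i, D_j] ∧ D_1 ∧ ⋯ D̂_i ⋯ D̂_j ⋯ ∧ D_n (extended to degree 0 by the anchor), is a Gerstenhaber algebra over A. -/

import Mathlib

/-!
Bracketing with a multivector `a` of degree `i` must be a graded derivation of degree `i - 1`, and
skew-symmetry forces its values on the generators: `[a, x] = -L_x a` for a vector `x`, with `L_x`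
the Lie derivative, and `[a, f] = ± i_{df} a` for a scalar `f`, with `i_{df}` the contraction. Such
values extend to a unique graded derivation: graded derivations of degree `p` are the sections of
the square-zero extension of `⋀ L` by the bimodule `⋀ L` whose left action is twisted by the Koszul
sign, and sections are provided by the universal property of the exterior algebra.

A graded derivation is determined by its values on generators, and graded commutators of graded
derivations are graded derivations. Hence `ad [a, b] = [ad a, ad b]`, which is the Jacobi identity,
needs checking on generators only, where by skew-symmetry it says that `L_x` and `i_{df}` act as
derivations of the bracket. The latter is checked on generators as well, and follows there from the
Cartan relations between Lie derivatives and contractions.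
-/

universe u

/-- A `(K, A)`-Lie-Rinehart algebra structure on an `A`-module `L`. -/
structure LieRinehart (K A L : Type u) [CommRing K] [CommRing A] [Algebra K A]
    [AddCommGroup L] [Module A L] where
  bracket : L → L → L
  anchor : L →ₗ[A] Derivation K A A
  bracket_add_left : ∀ x y z : L, bracket (x + y) z = bracket x z + bracket y z
  bracket_add_right : ∀ x y z : L, bracket x (y + z) = bracket x y + bracket x z
  bracket_skew : ∀ x y : L, bracket x y = - bracket y x
  bracket_jacobi : ∀ x y z : L,
    bracket x (bracket y z) = bracket (bracket x y) z + bracket y (bracket x z)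
  bracket_leibniz : ∀ (x : L) (a : A) (y : L),
    bracket x (a • y) = a • bracket x y + anchor x a • y
  anchor_bracket : ∀ (x y : L) (a : A),
    anchor (bracket x y) a = anchor x (anchor y a) - anchor y (anchor x a)

/-- A morphism of `(K, A)`-Lie-Rinehart algebras. -/
structure LieRinehartHom {K A L L' : Type u} [CommRing K] [CommRing A] [Algebra K A]
    [AddCommGroup L] [Module A L] [AddCommGroup L'] [Module A L']
    (𝓛 : LieRinehart K A L) (𝓛' : LieRinehart K A L') where
  toFun : L →ₗ[A] L'
  map_bracket : ∀ x y, toFun (𝓛.bracket x y) = 𝓛'.bracket (toFun x) (toFun y)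
  map_anchor : ∀ x, 𝓛'.anchor (toFun x) = 𝓛.anchor x

/-- The sign `(-1)^e` for `e : ℤ`. -/
def sgnz (e : ℤ) : ℤˣ := (-1 : ℤˣ) ^ e

/-- A Gerstenhaber algebra structure on the exterior algebra `∧•_A L` of a Lie-Rinehart
algebra `L`, whose bracket is the generalized Schouten–Nijenhuis bracket: it extends the Lie
bracket of `L` and the action `[D, f] = ρ(D)(f)` of the anchor, is of degree `-1` with respect
to the exterior grading, and satisfies the graded Leibniz rule with respect to the wedge
product, graded skew-symmetry and the graded Jacobi identity. -/
structure SchoutenBracket {K A L : Type u} [CommRing K] [CommRing A] [Algebra K A]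
    [AddCommGroup L] [Module A L] (𝓛 : LieRinehart K A L) where
  Br : ExteriorAlgebra A L → ExteriorAlgebra A L → ExteriorAlgebra A L
  add_left : ∀ x y z, Br (x + y) z = Br x z + Br y z
  add_right : ∀ x y z, Br x (y + z) = Br x y + Br x z
  degree : ∀ (i j : ℕ) (x y : ExteriorAlgebra A L),
    x ∈ ⋀[A]^i L → y ∈ ⋀[A]^j L → Br x y ∈ ⋀[A]^(i + j - 1) L
  on_gen : ∀ D D' : L,
    Br (ExteriorAlgebra.ι A D) (ExteriorAlgebra.ι A D') = ExteriorAlgebra.ι A (𝓛.bracket D D')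
  on_scalar : ∀ (D : L) (f : A),
    Br (ExteriorAlgebra.ι A D) (algebraMap A (ExteriorAlgebra A L) f) =
      algebraMap A (ExteriorAlgebra A L) (𝓛.anchor D f)
  leibniz : ∀ (i j : ℕ) (a b c : ExteriorAlgebra A L), a ∈ ⋀[A]^i L → b ∈ ⋀[A]^j L →
    Br a (b * c) = Br a b * c + sgnz (((i : ℤ) - 1) * j) • (b * Br a c)
  skew : ∀ (i j : ℕ) (a b : ExteriorAlgebra A L), a ∈ ⋀[A]^i L → b ∈ ⋀[A]^j L →
    Br a b = -(sgnz (((i : ℤ) - 1) * ((j : ℤ) - 1)) • Br b a)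
  jacobi : ∀ (i j : ℕ) (a b c : ExteriorAlgebra A L), a ∈ ⋀[A]^i L → b ∈ ⋀[A]^j L →
    Br a (Br b c) = Br (Br a b) c + sgnz (((i : ℤ) - 1) * ((j : ℤ) - 1)) • Br b (Br a c)

namespace Multivector

open ExteriorAlgebra

variable {A L : Type*} [CommRing A] [AddCommGroup L] [Module A L]

variable (A L) in
/-- The homogeneous multivectors of degree `n`. The degree is an integer so that derivations may
lower it; there are no nonzero multivectors of negative degree. -/
def homogeneous : ℤ → Submodule A (ExteriorAlgebra A L)
  | .ofNat n => ⋀[A]^n L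
  | .negSucc _ => ⊥

theorem mem_homogeneous_of_mem_exteriorPower {n : ℕ} {u : ExteriorAlgebra A L}
    (hu : u ∈ ⋀[A]^n L) : u ∈ homogeneous A L n :=
  hu

theorem homogeneous_le_exteriorPower (n : ℤ) : homogeneous A L n ≤ ⋀[A]^n.toNat L := by
  cases n with
  | ofNat n => exact le_rfl
  | negSucc n => exact bot_le

theorem algebraMap_mem_homogeneous (f : A) : algebraMap A _ f ∈ homogeneous A L 0 :=
  SetLike.algebraMap_mem_graded (fun n : ℕ => ⋀[A]^n L) f

theorem ι_mem_homogeneous (x : L) : ι A x ∈ homogeneous A L 1 := by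
  change ι A x ∈ ⋀[A]^1 L
  simp

theorem mul_mem_homogeneous {m n : ℤ} {u v : ExteriorAlgebra A L} (hu : u ∈ homogeneous A L m)
    (hv : v ∈ homogeneous A L n) : u * v ∈ homogeneous A L (m + n) := by
  cases m with
  | negSucc m => simp [(Submodule.mem_bot A).1 hu]
  | ofNat m =>
    cases n with
    | negSucc n => simp [(Submodule.mem_bot A).1 hv]
    | ofNat n => exact SetLike.mul_mem_graded (A := fun n : ℕ => ⋀[A]^n L) hu hv

theorem ι_mul_mem_homogeneous (x : L) {n : ℤ} {u : ExteriorAlgebra A L}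
    (hu : u ∈ homogeneous A L n) : ι A x * u ∈ homogeneous A L (n + 1) := by
  rw [add_comm]
  exact mul_mem_homogeneous (ι_mem_homogeneous x) hu

@[elab_as_elim]
theorem homogeneous_induction
    {motive : ∀ (n : ℤ) (u : ExteriorAlgebra A L), u ∈ homogeneous A L n → Prop}
    (zero : ∀ n, motive n 0 (zero_mem _))
    (algebraMap : ∀ f, motive 0 (algebraMap A _ f) (algebraMap_mem_homogeneous f))
    (add : ∀ n u v hu hv, motive n u hu → motive n v hv → motive n (u + v) (add_mem hu hv))
    (ι_mul : ∀ n x u hu, motive n u hu → motive (n + 1) (ι A x * u) (ι_mul_mem_homogeneous x hu))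
    {n : ℤ} {u : ExteriorAlgebra A L} (hu : u ∈ homogeneous A L n) : motive n u hu := by
  cases n with
  | negSucc n =>
    obtain rfl := (Submodule.mem_bot A).1 hu
    exact zero _
  | ofNat n =>
    induction hu using Submodule.pow_induction_on_left' with
    | algebraMap f => exact algebraMap f
    | add u v n hu hv ihu ihv => exact add n u v hu hv ihu ihv
    | mem_mul x hx n u hu ih =>
      obtain ⟨x, rfl⟩ := hx
      exact ι_mul n x u hu ih

/-- The algebra endomorphism of the exterior algebra multiplying degree `n` by `(-1) ^ (p * n)`:
the Koszul sign of moving an operator of degree `p` past its argument. -/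
def koszulTwist (p : ℤ) : ExteriorAlgebra A L →ₐ[A] ExteriorAlgebra A L :=
  ExteriorAlgebra.map (p.negOnePow • LinearMap.id)

@[simp]
theorem koszulTwist_ι (p : ℤ) (x : L) : koszulTwist p (ι A x) = p.negOnePow • ι A x := by
  simp [koszulTwist]

theorem koszulTwist_koszulTwist (p q : ℤ) (u : ExteriorAlgebra A L) :
    koszulTwist p (koszulTwist q u) = koszulTwist (p + q) u := by
  rw [koszulTwist, koszulTwist, koszulTwist, ← AlgHom.comp_apply, map_comp_map, p.negOnePow_add]
  congr 2
  ext x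
  simp [smul_smul]

theorem koszulTwist_apply (p : ℤ) {n : ℤ} {u : ExteriorAlgebra A L}
    (hu : u ∈ homogeneous A L n) : koszulTwist p u = (p * n).negOnePow • u := by
  induction hu using homogeneous_induction with
  | zero n => simp
  | algebraMap f => simp
  | add n u v _ _ hu hv => rw [map_add, hu, hv, smul_add]
  | ι_mul n x u _ hu =>
    rw [map_mul, hu, koszulTwist_ι, smul_mul_smul_comm, ← Int.negOnePow_add, mul_add_one, add_comm]

theorem mul_ι {n : ℤ} {u : ExteriorAlgebra A L} (hu : u ∈ homogeneous A L n) (x : L) :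
    u * ι A x = n.negOnePow • (ι A x * u) := by
  induction hu using homogeneous_induction with
  | zero n => simp
  | algebraMap f => simp [Algebra.commutes]
  | add n u v _ _ hu hv => rw [add_mul, hu, hv, mul_add, smul_add]
  | ι_mul n y u _ hu =>
    have anticomm : ι A y * ι A x = -(ι A x * ι A y) :=
      eq_neg_of_add_eq_zero_left (ι_add_mul_swap y x)
    rw [mul_assoc, hu, mul_smul_comm, ← mul_assoc, anticomm, neg_mul, mul_assoc,
      Int.negOnePow_succ, Units.neg_smul, smul_neg]

theorem mul_eq_koszulTwist_mul {n : ℤ} {u : ExteriorAlgebra A L} (hu : u ∈ homogeneous A L n)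
    (v : ExteriorAlgebra A L) : u * v = koszulTwist n v * u := by
  induction v using ExteriorAlgebra.induction with
  | algebraMap f => rw [AlgHom.commutes, Algebra.commutes]
  | ι x => rw [mul_ι hu, koszulTwist_ι, smul_mul_assoc]
  | mul v w hv hw => rw [← mul_assoc, hv, mul_assoc, hw, ← mul_assoc, map_mul]
  | add v w hv hw => rw [mul_add, hv, hw, map_add, add_mul]

theorem mul_eq_negOnePow_smul_mul {m n : ℤ} {u v : ExteriorAlgebra A L}
    (hu : u ∈ homogeneous A L m) (hv : v ∈ homogeneous A L n) :
    u * v = (m * n).negOnePow • (v * u) := by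
  rw [mul_eq_koszulTwist_mul hu, koszulTwist_apply m hv, smul_mul_assoc]

/-- `D` is a graded derivation of degree `p` of the exterior algebra. It is only additive, since
the derivations of interest differentiate the scalars too. -/
structure IsGradedDerivation (p : ℤ) (D : ExteriorAlgebra A L →+ ExteriorAlgebra A L) : Prop where
  map_mul : ∀ u v, D (u * v) = D u * v + koszulTwist p u * D v
  map_mem : ∀ {n : ℤ} {u : ExteriorAlgebra A L},
    u ∈ homogeneous A L n → D u ∈ homogeneous A L (p + n)

/-- The commutator of endomorphisms of degrees `p` and `q`. -/
def gradedCommutator (p q : ℤ) (D D' : ExteriorAlgebra A L →+ ExteriorAlgebra A L) :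
    ExteriorAlgebra A L →+ ExteriorAlgebra A L :=
  D.comp D' - (p * q).negOnePow • D'.comp D

theorem gradedCommutator_apply (p q : ℤ) (D D' : ExteriorAlgebra A L →+ ExteriorAlgebra A L)
    (u : ExteriorAlgebra A L) :
    gradedCommutator p q D D' u = D (D' u) - (p * q).negOnePow • D' (D u) :=
  rfl

namespace IsGradedDerivation

variable {p q : ℤ} {D D' : ExteriorAlgebra A L →+ ExteriorAlgebra A L}

theorem of_generators (map_mul : ∀ u v, D (u * v) = D u * v + koszulTwist p u * D v)
    (map_algebraMap_mem : ∀ f, D (algebraMap A _ f) ∈ homogeneous A L p)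
    (map_ι_mem : ∀ x, D (ι A x) ∈ homogeneous A L (p + 1)) : IsGradedDerivation p D where
  map_mul := map_mul
  map_mem hu := by
    induction hu using homogeneous_induction with
    | zero n => simp
    | algebraMap f => simpa using map_algebraMap_mem f
    | add n u v _ _ hu hv => rw [map_add]; exact add_mem hu hv
    | ι_mul n x u hu ih =>
      rw [map_mul, koszulTwist_ι, smul_mul_assoc]
      have h₁ := mul_mem_homogeneous (map_ι_mem x) hu
      have h₂ := ι_mul_mem_homogeneous x ih
      rw [add_right_comm, add_assoc] at h₁
      rw [add_assoc] at h₂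
      exact add_mem h₁ (Submodule.smul_of_tower_mem _ _ h₂)

theorem ext (hD : IsGradedDerivation p D) (hD' : IsGradedDerivation p D')
    (h_algebraMap : ∀ f, D (algebraMap A _ f) = D' (algebraMap A _ f))
    (h_ι : ∀ x, D (ι A x) = D' (ι A x)) : D = D' := by
  ext u
  induction u using ExteriorAlgebra.induction with
  | algebraMap f => exact h_algebraMap f
  | ι x => exact h_ι x
  | mul u v hu hv => rw [hD.map_mul, hD'.map_mul, hu, hv]
  | add u v hu hv => rw [map_add, map_add, hu, hv]

theorem zero : IsGradedDerivation p (0 : ExteriorAlgebra A L →+ ExteriorAlgebra A L) :=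
  ⟨by simp, by simp⟩

theorem add (hD : IsGradedDerivation p D) (hD' : IsGradedDerivation p D') :
    IsGradedDerivation p (D + D') where
  map_mul u v := by
    simp only [AddMonoidHom.add_apply, hD.map_mul, hD'.map_mul, add_mul, mul_add]
    abel
  map_mem hu := add_mem (hD.map_mem hu) (hD'.map_mem hu)

theorem neg (hD : IsGradedDerivation p D) : IsGradedDerivation p (-D) where
  map_mul u v := by
    simp only [AddMonoidHom.neg_apply, hD.map_mul, neg_mul, mul_neg, neg_add]
  map_mem hu := neg_mem (hD.map_mem hu)

theorem intUnits_smul (hD : IsGradedDerivation p D) (ε : ℤˣ) : IsGradedDerivation p (ε • D) := by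
  rcases Int.units_eq_one_or ε with rfl | rfl
  · simpa using hD
  · simpa using hD.neg

theorem mulLeft_comp (hD : IsGradedDerivation p D) {n : ℤ} {u : ExteriorAlgebra A L}
    (hu : u ∈ homogeneous A L n) :
    IsGradedDerivation (n + p) ((AddMonoidHom.mulLeft u).comp D) where
  map_mul v w := by
    change u * D (v * w) = u * D v * w + koszulTwist (n + p) v * (u * D w)
    rw [hD.map_mul, mul_add, ← mul_assoc, ← mul_assoc, mul_eq_koszulTwist_mul hu (koszulTwist p v),
      koszulTwist_koszulTwist, mul_assoc, mul_assoc]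
  map_mem hv := by
    rw [add_assoc]
    exact mul_mem_homogeneous hu (hD.map_mem hv)

theorem koszulTwist_apply (hD : IsGradedDerivation p D) (n : ℤ) (u : ExteriorAlgebra A L) :
    koszulTwist n (D u) = (n * p).negOnePow • D (koszulTwist n u) := by
  induction u using DirectSum.Decomposition.inductionOn (fun k : ℕ => ⋀[A]^k L) with
  | zero => simp
  | add u v hu hv => simp only [map_add, hu, hv, smul_add]
  | homogeneous u =>
    have hu := mem_homogeneous_of_mem_exteriorPower u.2
    rw [Multivector.koszulTwist_apply n (hD.map_mem hu), Multivector.koszulTwist_apply n hu,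
      map_zsmul_unit, smul_smul, ← Int.negOnePow_add, mul_add]

theorem gradedCommutator (hD : IsGradedDerivation p D) (hD' : IsGradedDerivation q D') :
    IsGradedDerivation (p + q) (gradedCommutator p q D D') where
  map_mul u v := by
    simp only [gradedCommutator_apply, hD.map_mul, hD'.map_mul, map_add, hD.koszulTwist_apply,
      hD'.koszulTwist_apply, koszulTwist_koszulTwist, smul_add, sub_mul, mul_sub, smul_mul_assoc,
      mul_smul_comm, smul_smul, add_comm q p, mul_comm q p, Int.units_mul_self, one_smul]
    abel
  map_mem {n u} hu := by
    have h₁ := hD.map_mem (hD'.map_mem hu)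
    have h₂ := hD'.map_mem (hD.map_mem hu)
    rw [← add_assoc] at h₁ h₂
    rw [add_comm q p] at h₂
    exact sub_mem h₁ (Submodule.smul_of_tower_mem _ (p * q).negOnePow h₂)

end IsGradedDerivation

variable {p : ℤ}

variable (A L) in
/-- The exterior algebra as a bimodule over itself, acting on the left through the Koszul twist.
The graded derivations of degree `p` are the bimodule derivations with values here. -/
def KoszulBimodule (_ : ℤ) : Type _ :=
  ExteriorAlgebra A L

namespace KoszulBimodule

noncomputable instance : AddCommGroup (KoszulBimodule A L p) :=
  inferInstanceAs (AddCommGroup (ExteriorAlgebra A L))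

noncomputable instance : Module (ExteriorAlgebra A L) (KoszulBimodule A L p) :=
  Module.compHom (ExteriorAlgebra A L)
    (koszulTwist p : ExteriorAlgebra A L →ₐ[A] ExteriorAlgebra A L).toRingHom

noncomputable instance : Module (ExteriorAlgebra A L)ᵐᵒᵖ (KoszulBimodule A L p) :=
  inferInstanceAs (Module (ExteriorAlgebra A L)ᵐᵒᵖ (ExteriorAlgebra A L))

instance : SMulCommClass (ExteriorAlgebra A L) (ExteriorAlgebra A L)ᵐᵒᵖ (KoszulBimodule A L p) where
  smul_comm u v w := (mul_assoc (koszulTwist p u) (w : ExteriorAlgebra A L) v.unop).symm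

end KoszulBimodule

variable (A L p) in
/-- The values on scalars and vectors of a graded derivation of degree `p`, with the compatibilities
under which `DerivationData.extend` builds that derivation. -/
structure DerivationData where
  onScalar : A →+ ExteriorAlgebra A L
  onVector : L →+ ExteriorAlgebra A L
  onScalar_mul : ∀ f g, onScalar (f * g) = f • onScalar g + g • onScalar f
  onVector_smul : ∀ (f : A) (x : L), onVector (f • x) = f • onVector x + onScalar f * ι A x
  onScalar_mem : ∀ f, onScalar f ∈ homogeneous A L p
  onVector_mem : ∀ x, onVector x ∈ homogeneous A L (p + 1)

namespace DerivationData

variable (d : DerivationData A L p)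

/-- The square-zero extension of the exterior algebra by the Koszul bimodule, in which `A` is
embedded through `d.onScalar`. -/
def SquareZeroExtension (_ : DerivationData A L p) : Type _ :=
  TrivSqZeroExt (ExteriorAlgebra A L) (KoszulBimodule A L p)

namespace SquareZeroExtension

noncomputable instance : Ring d.SquareZeroExtension :=
  inferInstanceAs (Ring (TrivSqZeroExt (ExteriorAlgebra A L) (KoszulBimodule A L p)))

variable {d}

/-- The element of the square-zero extension with base component `u` and fibre component `v`. -/
def pair (u v : ExteriorAlgebra A L) : d.SquareZeroExtension :=
  (u, v)

/-- The projection of the square-zero extension to the exterior algebra. -/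
noncomputable def base : d.SquareZeroExtension →+* ExteriorAlgebra A L where
  toFun := TrivSqZeroExt.fst
  map_one' := rfl
  map_mul' _ _ := rfl
  map_zero' := rfl
  map_add' _ _ := rfl

/-- The projection of the square-zero extension to the Koszul bimodule. -/
noncomputable def fibre : d.SquareZeroExtension →+ ExteriorAlgebra A L where
  toFun := TrivSqZeroExt.snd
  map_zero' := rfl
  map_add' _ _ := rfl

theorem ext {s t : d.SquareZeroExtension} (h_base : base s = base t) (h_fibre : fibre s = fibre t) :
    s = t :=
  TrivSqZeroExt.ext h_base h_fibre

@[simp]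
theorem base_pair (u v : ExteriorAlgebra A L) : base (pair u v : d.SquareZeroExtension) = u :=
  rfl

@[simp]
theorem fibre_pair (u v : ExteriorAlgebra A L) : fibre (pair u v : d.SquareZeroExtension) = v :=
  rfl

theorem fibre_mul (s t : d.SquareZeroExtension) :
    fibre (s * t) = fibre s * base t + koszulTwist p (base s) * fibre t :=
  add_comm _ _

end SquareZeroExtension

open SquareZeroExtension

theorem onScalar_one : d.onScalar 1 = 0 := by
  simpa using d.onScalar_mul 1 1

/-- The embedding of `A` in the square-zero extension. -/
noncomputable def scalarHom : A →+* d.SquareZeroExtension where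
  toFun f := pair (algebraMap A _ f) (d.onScalar f)
  map_one' := SquareZeroExtension.ext (by simp) d.onScalar_one
  map_mul' f g := SquareZeroExtension.ext (by simp) (by
    rw [fibre_mul, fibre_pair, fibre_pair, fibre_pair, base_pair, base_pair, AlgHom.commutes,
      d.onScalar_mul, ← Algebra.commutes, ← Algebra.smul_def, ← Algebra.smul_def, add_comm])
  map_zero' := SquareZeroExtension.ext (by simp) (by simp)
  map_add' f g := SquareZeroExtension.ext (by simp) (by simp)

theorem scalarHom_commutes (f : A) (s : d.SquareZeroExtension) :
    d.scalarHom f * s = s * d.scalarHom f := by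
  refine SquareZeroExtension.ext ?_ ?_
  · rw [map_mul, map_mul]
    exact Algebra.commutes f _
  · rw [fibre_mul, fibre_mul]
    change d.onScalar f * base s + koszulTwist p (algebraMap A _ f) * fibre s =
      fibre s * algebraMap A _ f + koszulTwist p (base s) * d.onScalar f
    rw [mul_eq_koszulTwist_mul (d.onScalar_mem f), AlgHom.commutes, Algebra.commutes, add_comm]

noncomputable instance : Algebra A d.SquareZeroExtension :=
  d.scalarHom.toAlgebra' d.scalarHom_commutes

/-- The lift of the inclusion of `L` to the square-zero extension through `d.onVector`. -/
noncomputable def vectorHom : L →ₗ[A] d.SquareZeroExtension where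
  toFun x := pair (ι A x) (d.onVector x)
  map_add' x y := SquareZeroExtension.ext (by simp) (by simp)
  map_smul' f x := by
    rw [RingHom.id_apply, Algebra.smul_def]
    refine SquareZeroExtension.ext ?_ ?_
    · rw [map_mul, base_pair, base_pair, map_smul, Algebra.smul_def]
      rfl
    · rw [fibre_mul, fibre_pair, fibre_pair, base_pair, d.onVector_smul, add_comm, Algebra.smul_def]
      change _ = _ + koszulTwist p (algebraMap A _ f) * _
      rw [AlgHom.commutes]
      rfl

theorem vectorHom_mul_self (x : L) : d.vectorHom x * d.vectorHom x = 0 := by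
  refine SquareZeroExtension.ext (by simp [vectorHom]) ?_
  rw [fibre_mul, map_zero]
  change d.onVector x * ι A x + koszulTwist p (ι A x) * d.onVector x = 0
  rw [mul_ι (d.onVector_mem x), koszulTwist_ι, Int.negOnePow_succ, Units.neg_smul, smul_mul_assoc,
    neg_add_cancel]

/-- The section of the square-zero extension determined by `d`. -/
noncomputable def sectionHom : ExteriorAlgebra A L →ₐ[A] d.SquareZeroExtension :=
  ExteriorAlgebra.lift A ⟨d.vectorHom, d.vectorHom_mul_self⟩

theorem sectionHom_ι (x : L) : d.sectionHom (ι A x) = pair (ι A x) (d.onVector x) :=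
  ExteriorAlgebra.lift_ι_apply ..

theorem sectionHom_algebraMap (f : A) :
    d.sectionHom (algebraMap A _ f) = pair (algebraMap A _ f) (d.onScalar f) :=
  d.sectionHom.commutes f

theorem base_sectionHom (u : ExteriorAlgebra A L) : base (d.sectionHom u) = u := by
  induction u using ExteriorAlgebra.induction with
  | algebraMap f => rw [sectionHom_algebraMap, base_pair]
  | ι x => rw [sectionHom_ι, base_pair]
  | mul u v hu hv => rw [map_mul, map_mul, hu, hv]
  | add u v hu hv => rw [map_add, map_add, hu, hv]

/-- The graded derivation with the values `d` on scalars and vectors. -/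
noncomputable def extend : ExteriorAlgebra A L →+ ExteriorAlgebra A L :=
  fibre.comp d.sectionHom.toAddMonoidHom

theorem extend_algebraMap (f : A) : d.extend (algebraMap A _ f) = d.onScalar f :=
  congrArg fibre (d.sectionHom_algebraMap f)

theorem extend_ι (x : L) : d.extend (ι A x) = d.onVector x :=
  congrArg fibre (d.sectionHom_ι x)

theorem isGradedDerivation_extend : IsGradedDerivation p d.extend := by
  refine .of_generators (fun u v => ?_) (fun f => ?_) (fun x => ?_)
  · change fibre (d.sectionHom (u * v)) = fibre (d.sectionHom u) * v + _ * fibre (d.sectionHom v)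
    rw [map_mul, fibre_mul, base_sectionHom, base_sectionHom]
  · rw [extend_algebraMap]
    exact d.onScalar_mem f
  · rw [extend_ι]
    exact d.onVector_mem x

end DerivationData

end Multivector

namespace LieRinehart

open ExteriorAlgebra Multivector

variable {K A L : Type u} [CommRing K] [CommRing A] [Algebra K A] [AddCommGroup L] [Module A L]
  (𝓛 : LieRinehart K A L)

theorem bracket_smul_left (f : A) (x y : L) :
    𝓛.bracket (f • x) y = f • 𝓛.bracket x y - 𝓛.anchor y f • x := by
  rw [𝓛.bracket_skew, 𝓛.bracket_leibniz, 𝓛.bracket_skew y x, smul_neg]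
  abel

/-- The differential `df`, as the linear form `x ↦ ρ(x)(f)` on `L`. -/
def differential (f : A) : Module.Dual A L where
  toFun x := 𝓛.anchor x f
  map_add' := by simp
  map_smul' := by simp

theorem differential_add (f g : A) :
    𝓛.differential (f + g) = 𝓛.differential f + 𝓛.differential g := by
  ext x
  simp [differential]

theorem differential_mul (f g : A) :
    𝓛.differential (f * g) = f • 𝓛.differential g + g • 𝓛.differential f := by
  ext x
  simp [differential]

/-- The contraction of multivectors with the differential of `f`. -/
noncomputable def contraction (f : A) : ExteriorAlgebra A L →+ ExteriorAlgebra A L :=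
  (CliffordAlgebra.contractLeft (𝓛.differential f)).toAddMonoidHom

theorem contraction_apply (f : A) (u : ExteriorAlgebra A L) :
    𝓛.contraction f u = CliffordAlgebra.contractLeft (𝓛.differential f) u :=
  rfl

theorem contraction_algebraMap (f g : A) : 𝓛.contraction f (algebraMap A _ g) = 0 :=
  CliffordAlgebra.contractLeft_algebraMap ..

theorem contraction_ι (f : A) (x : L) : 𝓛.contraction f (ι A x) = algebraMap A _ (𝓛.anchor x f) :=
  CliffordAlgebra.contractLeft_ι ..

theorem contraction_ι_mul (f : A) (x : L) (u : ExteriorAlgebra A L) :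
    𝓛.contraction f (ι A x * u) = 𝓛.anchor x f • u - ι A x * 𝓛.contraction f u :=
  CliffordAlgebra.contractLeft_ι_mul ..

theorem contraction_add (f g : A) (u : ExteriorAlgebra A L) :
    𝓛.contraction (f + g) u = 𝓛.contraction f u + 𝓛.contraction g u := by
  rw [contraction_apply, differential_add, map_add, LinearMap.add_apply]
  rfl

theorem contraction_mul (f g : A) (u : ExteriorAlgebra A L) :
    𝓛.contraction (f * g) u = f • 𝓛.contraction g u + g • 𝓛.contraction f u := by
  rw [contraction_apply, differential_mul, map_add, map_smul, map_smul]
  rfl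

theorem contraction_contraction (f g : A) (u : ExteriorAlgebra A L) :
    𝓛.contraction f (𝓛.contraction g u) = -𝓛.contraction g (𝓛.contraction f u) :=
  CliffordAlgebra.contractLeft_comm ..

theorem isGradedDerivation_contraction (f : A) : IsGradedDerivation (-1) (𝓛.contraction f) := by
  refine .of_generators (fun u v => ?_) (fun g => ?_) (fun x => ?_)
  · induction u using CliffordAlgebra.left_induction with
    | algebraMap g =>
      rw [contraction_algebraMap, AlgHom.commutes, zero_mul, zero_add, ← Algebra.smul_def,
        ← Algebra.smul_def, contraction_apply, map_smul, contraction_apply]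
    | add u w hu hw => rw [add_mul, map_add, hu, hw, map_add, map_add, add_mul, add_mul]; abel
    | ι_mul u x hu =>
      change 𝓛.contraction f (ι A x * u * v) = 𝓛.contraction f (ι A x * u) * v +
        koszulTwist (-1) (ι A x * u) * 𝓛.contraction f v
      rw [mul_assoc, contraction_ι_mul, hu, contraction_ι_mul, map_mul, koszulTwist_ι]
      simp only [mul_add, sub_mul, smul_mul_assoc, mul_assoc, Int.negOnePow_neg, Int.negOnePow_one,
        Units.neg_smul, one_smul, neg_mul]
      abel
  · simp [contraction_algebraMap]
  · rw [contraction_ι]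
    exact algebraMap_mem_homogeneous _

/-- The Lie derivative along `x` on scalars and vectors. -/
def lieDerivativeData (x : L) : DerivationData A L 0 where
  onScalar := ((algebraMap A (ExteriorAlgebra A L)).toAddMonoidHom).comp (𝓛.anchor x).toAddMonoidHom
  onVector := AddMonoidHom.mk' (fun y => ι A (𝓛.bracket x y)) (by simp [𝓛.bracket_add_right])
  onScalar_mul f g := by simp [Algebra.smul_def]
  onVector_smul f y := by simp [𝓛.bracket_leibniz, Algebra.smul_def]
  onScalar_mem f := algebraMap_mem_homogeneous _
  onVector_mem y := ι_mem_homogeneous _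

/-- The Lie derivative of multivectors along `x`. -/
noncomputable def lieDerivative (x : L) : ExteriorAlgebra A L →+ ExteriorAlgebra A L :=
  (𝓛.lieDerivativeData x).extend

theorem isGradedDerivation_lieDerivative (x : L) : IsGradedDerivation 0 (𝓛.lieDerivative x) :=
  (𝓛.lieDerivativeData x).isGradedDerivation_extend

theorem lieDerivative_algebraMap (x : L) (f : A) :
    𝓛.lieDerivative x (algebraMap A _ f) = algebraMap A _ (𝓛.anchor x f) :=
  (𝓛.lieDerivativeData x).extend_algebraMap f

theorem lieDerivative_ι (x y : L) : 𝓛.lieDerivative x (ι A y) = ι A (𝓛.bracket x y) :=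
  (𝓛.lieDerivativeData x).extend_ι y

theorem lieDerivative_add (x y : L) :
    𝓛.lieDerivative (x + y) = 𝓛.lieDerivative x + 𝓛.lieDerivative y :=
  (𝓛.isGradedDerivation_lieDerivative _).ext
    ((𝓛.isGradedDerivation_lieDerivative x).add (𝓛.isGradedDerivation_lieDerivative y))
    (by simp [lieDerivative_algebraMap]) (by simp [lieDerivative_ι, 𝓛.bracket_add_left])

theorem lieDerivative_smul (f : A) (x : L) (u : ExteriorAlgebra A L) :
    𝓛.lieDerivative (f • x) u = f • 𝓛.lieDerivative x u - ι A x * 𝓛.contraction f u := by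
  have h := (𝓛.isGradedDerivation_lieDerivative x).mulLeft_comp (algebraMap_mem_homogeneous f)
  have h' := ((𝓛.isGradedDerivation_contraction f).mulLeft_comp (ι_mem_homogeneous x)).neg
  rw [Algebra.smul_def, sub_eq_add_neg]
  refine DFunLike.congr_fun ((𝓛.isGradedDerivation_lieDerivative _).ext (h.add h') ?_ ?_) u
  · simp [contraction_algebraMap, lieDerivative_algebraMap]
  · simp [contraction_ι, lieDerivative_ι, bracket_smul_left, Algebra.smul_def, Algebra.commutes,
      sub_eq_add_neg]

theorem lieDerivative_bracket (x y : L) :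
    𝓛.lieDerivative (𝓛.bracket x y) =
      gradedCommutator 0 0 (𝓛.lieDerivative x) (𝓛.lieDerivative y) := by
  refine (𝓛.isGradedDerivation_lieDerivative _).ext ((𝓛.isGradedDerivation_lieDerivative
    x).gradedCommutator (𝓛.isGradedDerivation_lieDerivative y)) (fun f => ?_) (fun z => ?_)
  · simp [gradedCommutator_apply, lieDerivative_algebraMap, 𝓛.anchor_bracket]
  · simp [gradedCommutator_apply, lieDerivative_ι, 𝓛.bracket_jacobi x y z]

theorem contraction_anchor (x : L) (f : A) :
    𝓛.contraction (𝓛.anchor x f) =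
      gradedCommutator 0 (-1) (𝓛.lieDerivative x) (𝓛.contraction f) := by
  refine (𝓛.isGradedDerivation_contraction _).ext ((𝓛.isGradedDerivation_lieDerivative
    x).gradedCommutator (𝓛.isGradedDerivation_contraction f)) (fun g => ?_) (fun y => ?_)
  · simp [gradedCommutator_apply, contraction_algebraMap, lieDerivative_algebraMap]
  · simp [gradedCommutator_apply, contraction_ι, lieDerivative_algebraMap, lieDerivative_ι,
      𝓛.anchor_bracket]

theorem contraction_mem_homogeneous (f : A) {n : ℤ} {u : ExteriorAlgebra A L}
    (hu : u ∈ homogeneous A L n) : 𝓛.contraction f u ∈ homogeneous A L (n - 1) := by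
  rw [sub_eq_neg_add]
  exact (𝓛.isGradedDerivation_contraction f).map_mem hu

theorem lieDerivative_mem_homogeneous (x : L) {n : ℤ} {u : ExteriorAlgebra A L}
    (hu : u ∈ homogeneous A L n) : 𝓛.lieDerivative x u ∈ homogeneous A L n := by
  simpa using (𝓛.isGradedDerivation_lieDerivative x).map_mem hu

variable {i j : ℤ} {a b : ExteriorAlgebra A L}

/-- The Schouten bracket with the multivector `a` of degree `i`, on scalars and vectors. -/
noncomputable def schoutenData (ha : a ∈ homogeneous A L i) : DerivationData A L (i - 1) where
  onScalar := AddMonoidHom.mk' (fun f => (i - 1).negOnePow • 𝓛.contraction f a)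
    (by simp [contraction_add])
  onVector := AddMonoidHom.mk' (fun x => -𝓛.lieDerivative x a)
    (by simp [lieDerivative_add, add_comm])
  onScalar_mul f g := by
    simp [contraction_mul, smul_comm (i - 1).negOnePow]
  onVector_smul f x := by
    simp only [AddMonoidHom.mk'_apply, lieDerivative_smul, smul_mul_assoc,
      mul_ι (𝓛.contraction_mem_homogeneous f ha), smul_smul, Int.units_mul_self, one_smul, smul_neg]
    abel
  onScalar_mem f := Submodule.smul_of_tower_mem _ _ (𝓛.contraction_mem_homogeneous f ha)
  onVector_mem x := by
    rw [sub_add_cancel]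
    exact neg_mem (𝓛.lieDerivative_mem_homogeneous x ha)

theorem schoutenData_extend_add (ha : a ∈ homogeneous A L i) (hb : b ∈ homogeneous A L i) :
    (𝓛.schoutenData (add_mem ha hb)).extend =
      (𝓛.schoutenData ha).extend + (𝓛.schoutenData hb).extend := by
  refine (DerivationData.isGradedDerivation_extend _).ext
    ((DerivationData.isGradedDerivation_extend _).add (DerivationData.isGradedDerivation_extend _))
    (fun f => ?_) (fun x => ?_)
  · simp [DerivationData.extend_algebraMap, schoutenData]
  · simp [DerivationData.extend_ι, schoutenData, add_comm]

/-- The Schouten–Nijenhuis bracket of multivectors. -/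
noncomputable def schouten :
    ExteriorAlgebra A L →+ ExteriorAlgebra A L →+ ExteriorAlgebra A L :=
  (DirectSum.toAddMonoid fun i : ℕ => AddMonoidHom.mk'
    (fun a : ⋀[A]^i L => (𝓛.schoutenData (mem_homogeneous_of_mem_exteriorPower a.2)).extend)
    fun a b => 𝓛.schoutenData_extend_add (mem_homogeneous_of_mem_exteriorPower a.2)
      (mem_homogeneous_of_mem_exteriorPower b.2)).comp
  (DirectSum.decomposeAddEquiv fun i : ℕ => ⋀[A]^i L).toAddMonoidHom

theorem schouten_eq_extend (ha : a ∈ homogeneous A L i) :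
    𝓛.schouten a = (𝓛.schoutenData ha).extend := by
  cases i with
  | ofNat i =>
    change DirectSum.toAddMonoid _ (DirectSum.decompose (fun i : ℕ => ⋀[A]^i L) a) = _
    rw [DirectSum.decompose_of_mem (ℳ := fun i : ℕ => ⋀[A]^i L) ha, DirectSum.toAddMonoid_of]
    rfl
  | negSucc i =>
    obtain rfl := (Submodule.mem_bot A).1 ha
    rw [map_zero]
    refine IsGradedDerivation.zero.ext (DerivationData.isGradedDerivation_extend _)
      (fun f => ?_) (fun x => ?_)
    · simp [DerivationData.extend_algebraMap, schoutenData]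
    · simp [DerivationData.extend_ι, schoutenData]

theorem isGradedDerivation_schouten (ha : a ∈ homogeneous A L i) :
    IsGradedDerivation (i - 1) (𝓛.schouten a) := by
  rw [𝓛.schouten_eq_extend ha]
  exact DerivationData.isGradedDerivation_extend _

theorem schouten_mem_homogeneous (ha : a ∈ homogeneous A L i) (hb : b ∈ homogeneous A L j) :
    𝓛.schouten a b ∈ homogeneous A L (i + j - 1) := by
  rw [add_sub_right_comm]
  exact (𝓛.isGradedDerivation_schouten ha).map_mem hb

theorem schouten_algebraMap_right (ha : a ∈ homogeneous A L i) (f : A) :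
    𝓛.schouten a (algebraMap A _ f) = (i - 1).negOnePow • 𝓛.contraction f a := by
  rw [𝓛.schouten_eq_extend ha, DerivationData.extend_algebraMap]
  rfl

theorem schouten_ι_right (a : ExteriorAlgebra A L) (x : L) :
    𝓛.schouten a (ι A x) = -𝓛.lieDerivative x a := by
  induction a using DirectSum.Decomposition.inductionOn (fun i : ℕ => ⋀[A]^i L) with
  | zero => simp
  | homogeneous a =>
    rw [𝓛.schouten_eq_extend (mem_homogeneous_of_mem_exteriorPower a.2), DerivationData.extend_ι]
    rfl
  | add a b ha hb => rw [map_add, AddMonoidHom.add_apply, ha, hb, map_add, neg_add]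

theorem schouten_eq_of_generators (ha : a ∈ homogeneous A L i)
    {D : ExteriorAlgebra A L →+ ExteriorAlgebra A L} (hD : IsGradedDerivation (i - 1) D)
    (h_algebraMap : ∀ f, D (algebraMap A _ f) = (i - 1).negOnePow • 𝓛.contraction f a)
    (h_ι : ∀ x, D (ι A x) = -𝓛.lieDerivative x a) : 𝓛.schouten a = D :=
  (𝓛.isGradedDerivation_schouten ha).ext hD
    (fun f => by rw [𝓛.schouten_algebraMap_right ha, h_algebraMap])
    (fun x => by rw [schouten_ι_right, h_ι])

theorem schouten_algebraMap (f : A) :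
    𝓛.schouten (algebraMap A _ f) = -𝓛.contraction f := by
  refine 𝓛.schouten_eq_of_generators (algebraMap_mem_homogeneous f)
    (𝓛.isGradedDerivation_contraction f).neg (fun g => ?_) (fun x => ?_)
  · simp [contraction_algebraMap]
  · simp [contraction_ι, lieDerivative_algebraMap]

theorem schouten_ι (x : L) : 𝓛.schouten (ι A x) = 𝓛.lieDerivative x := by
  refine 𝓛.schouten_eq_of_generators (ι_mem_homogeneous x)
    (𝓛.isGradedDerivation_lieDerivative x) (fun f => ?_) (fun y => ?_)
  · simp [contraction_ι, lieDerivative_algebraMap]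
  · rw [lieDerivative_ι, lieDerivative_ι, 𝓛.bracket_skew, map_neg]

theorem schouten_ι_mul (x : L) (ha : a ∈ homogeneous A L i) (c : ExteriorAlgebra A L) :
    𝓛.schouten (ι A x * a) c =
      ι A x * 𝓛.schouten a c + i.negOnePow • (a * 𝓛.lieDerivative x c) := by
  have h₁ := (𝓛.isGradedDerivation_schouten ha).mulLeft_comp (ι_mem_homogeneous x)
  have h₂ := (𝓛.isGradedDerivation_lieDerivative x).mulLeft_comp ha
  rw [add_sub_cancel, ← add_sub_cancel_right i 1] at h₁
  rw [add_zero, ← add_sub_cancel_right i 1] at h₂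
  refine DFunLike.congr_fun (𝓛.schouten_eq_of_generators (ι_mul_mem_homogeneous x ha)
    (h₁.add (h₂.intUnits_smul i.negOnePow)) (fun f => ?_) (fun y => ?_)) c
  · change ι A x * 𝓛.schouten a _ + i.negOnePow • (a * 𝓛.lieDerivative x _) = _
    rw [𝓛.schouten_algebraMap_right ha, lieDerivative_algebraMap, contraction_ι_mul,
      ← Algebra.commutes, ← Algebra.smul_def, mul_smul_comm, add_sub_cancel_right,
      Int.negOnePow_sub, Int.negOnePow_one]
    simp only [mul_neg, mul_one, Units.neg_smul, smul_sub]
    abel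
  · change ι A x * 𝓛.schouten a _ + i.negOnePow • (a * 𝓛.lieDerivative x _) = _
    rw [schouten_ι_right, lieDerivative_ι, mul_ι ha, smul_smul, Int.units_mul_self, one_smul,
      (𝓛.isGradedDerivation_lieDerivative y).map_mul, lieDerivative_ι, 𝓛.bracket_skew x y]
    simp only [koszulTwist_ι, Int.negOnePow_zero, one_smul, map_neg]
    noncomm_ring

theorem schouten_skew (ha : a ∈ homogeneous A L i) (hb : b ∈ homogeneous A L j) :
    𝓛.schouten a b = -(((i - 1) * (j - 1)).negOnePow • 𝓛.schouten b a) := by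
  induction hb using homogeneous_induction with
  | zero j => simp
  | algebraMap f =>
    simp [𝓛.schouten_algebraMap_right ha, schouten_algebraMap, -neg_sub]
  | add j b c _ _ hb hc => rw [map_add, hb, hc, map_add, AddMonoidHom.add_apply, smul_add, neg_add]
  | ι_mul j x b hb ih =>
    have sign₁ : i - 1 + (i - 1) * (j - 1) = (i - 1) * (j + 1 - 1) := by ring
    have sign₂ : ((i - 1) * (j + 1 - 1) + (j + j * i)).negOnePow = 1 :=
      Int.negOnePow_even _ ⟨i * j, by ring⟩
    rw [(𝓛.isGradedDerivation_schouten ha).map_mul, schouten_ι_right, ih, koszulTwist_ι,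
      𝓛.schouten_ι_mul x hb,
      mul_eq_negOnePow_smul_mul hb (𝓛.lieDerivative_mem_homogeneous x ha)]
    simp only [neg_mul, mul_neg, smul_mul_smul_comm, smul_add, smul_smul, ← Int.negOnePow_add,
      sign₁, sign₂, one_smul, neg_add]
    abel

theorem schouten_lieDerivative (x : L) (ha : a ∈ homogeneous A L i) :
    𝓛.schouten (𝓛.lieDerivative x a) =
      gradedCommutator 0 (i - 1) (𝓛.lieDerivative x) (𝓛.schouten a) := by
  have h := (𝓛.isGradedDerivation_lieDerivative x).gradedCommutator
    (𝓛.isGradedDerivation_schouten ha)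
  rw [zero_add] at h
  refine 𝓛.schouten_eq_of_generators (𝓛.lieDerivative_mem_homogeneous x ha) h
    (fun f => ?_) (fun y => ?_)
  · simp [gradedCommutator_apply, 𝓛.schouten_algebraMap_right ha, lieDerivative_algebraMap,
      contraction_anchor, smul_sub]
  · simp only [gradedCommutator_apply, schouten_ι_right, lieDerivative_ι, lieDerivative_bracket,
      map_neg, zero_mul, mul_zero, Int.negOnePow_zero, one_smul, neg_sub]
    abel

theorem schouten_contraction (f : A) (ha : a ∈ homogeneous A L i) :
    𝓛.schouten (𝓛.contraction f a) =
      gradedCommutator (-1) (i - 1) (𝓛.contraction f) (𝓛.schouten a) := by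
  have h := (𝓛.isGradedDerivation_contraction f).gradedCommutator
    (𝓛.isGradedDerivation_schouten ha)
  rw [← sub_eq_neg_add] at h
  refine 𝓛.schouten_eq_of_generators (𝓛.contraction_mem_homogeneous f ha) h
    (fun g => ?_) (fun y => ?_)
  · rw [gradedCommutator_apply, 𝓛.schouten_algebraMap_right ha, contraction_algebraMap, map_zero,
      smul_zero, sub_zero, map_zsmul_unit, contraction_contraction, Int.negOnePow_sub (i - 1) 1]
    simp
  · rw [gradedCommutator_apply, schouten_ι_right, contraction_ι, 𝓛.schouten_algebraMap_right ha,
      contraction_anchor, gradedCommutator_apply, smul_smul, neg_one_mul, Int.negOnePow_neg]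
    simp only [map_neg, mul_neg, neg_zero, mul_one, Int.units_mul_self, Int.negOnePow_zero,
      one_smul]
    abel

theorem schouten_schouten (ha : a ∈ homogeneous A L i) (hb : b ∈ homogeneous A L j) :
    𝓛.schouten (𝓛.schouten a b) =
      gradedCommutator (i - 1) (j - 1) (𝓛.schouten a) (𝓛.schouten b) := by
  have degree : i - 1 + (j - 1) = i + j - 1 - 1 := by ring
  have h := (𝓛.isGradedDerivation_schouten ha).gradedCommutator (𝓛.isGradedDerivation_schouten hb)
  rw [degree] at h
  refine 𝓛.schouten_eq_of_generators (𝓛.schouten_mem_homogeneous ha hb) h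
    (fun f => ?_) (fun x => ?_)
  · have contract := DFunLike.congr_fun (𝓛.schouten_contraction f ha) b
    rw [𝓛.schouten_skew (𝓛.contraction_mem_homogeneous f ha) hb, gradedCommutator_apply,
      eq_sub_iff_add_eq] at contract
    have sign₁ : i + j - 1 - 1 + -1 * (i - 1) = j - 1 := by ring
    have sign₂ : (i + j - 1 - 1 + (i - 1 - 1) * (j - 1)).negOnePow =
        ((i - 1) * (j - 1) + (i - 1)).negOnePow := by
      congr 1; ring
    rw [gradedCommutator_apply, 𝓛.schouten_algebraMap_right ha, 𝓛.schouten_algebraMap_right hb,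
      map_zsmul_unit, map_zsmul_unit, ← contract, smul_add, smul_neg, smul_smul, smul_smul,
      smul_smul, ← Int.negOnePow_add, ← Int.negOnePow_add, ← Int.negOnePow_add, sign₁, sign₂]
    abel
  · have derive := DFunLike.congr_fun (𝓛.schouten_lieDerivative x ha) b
    rw [𝓛.schouten_skew (𝓛.lieDerivative_mem_homogeneous x ha) hb, gradedCommutator_apply,
      zero_mul, Int.negOnePow_zero, one_smul, eq_sub_iff_add_eq] at derive
    rw [gradedCommutator_apply, schouten_ι_right, schouten_ι_right, map_neg, map_neg, smul_neg,
      ← derive]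
    abel

end LieRinehart

theorem sgnz_eq_negOnePow (e : ℤ) : sgnz e = e.negOnePow :=
  rfl

open Multivector in
theorem exteriorAlgebra_schouten_gerstenhaber_general
    {K A L : Type u} [CommRing K] [CommRing A] [Algebra K A] [AddCommGroup L] [Module A L]
    (𝓛 : LieRinehart K A L) : Nonempty (SchoutenBracket 𝓛) := by
  refine ⟨{
    Br := fun a b => 𝓛.schouten a b
    add_left := by simp
    add_right := by simp
    degree := fun i j a b ha hb => ?_
    on_gen := by simp [𝓛.schouten_ι, 𝓛.lieDerivative_ι]
    on_scalar := by simp [𝓛.schouten_ι, 𝓛.lieDerivative_algebraMap]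
    leibniz := fun i j a b c ha hb => ?_
    skew := fun i j a b ha hb => ?_
    jacobi := fun i j a b c ha hb => ?_ }⟩
  all_goals
    replace ha := mem_homogeneous_of_mem_exteriorPower ha
    replace hb := mem_homogeneous_of_mem_exteriorPower hb
  · have toNat_degree : ((i : ℤ) + j - 1).toNat = i + j - 1 := by omega
    rw [← toNat_degree]
    exact homogeneous_le_exteriorPower _ (𝓛.schouten_mem_homogeneous ha hb)
  · rw [(𝓛.isGradedDerivation_schouten ha).map_mul, koszulTwist_apply _ hb, smul_mul_assoc,
      sgnz_eq_negOnePow]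
  · exact 𝓛.schouten_skew ha hb
  · rw [𝓛.schouten_schouten ha hb, gradedCommutator_apply, sgnz_eq_negOnePow, sub_add_cancel]

/-- for a `(K, A)`-Lie-Rinehart algebra `L`, the exterior algebra `∧•_A L`,
equipped with the wedge product and the generalized Schouten–Nijenhuis bracket (extending the
Lie bracket of `L` and the anchor action on `A`), is a Gerstenhaber algebra over `A`. -/
theorem exteriorAlgebra_schouten_gerstenhaber
    (K A L : Type u) [Field K] [CommRing A] [Algebra K A]
    [AddCommGroup L] [Module A L] (𝓛 : LieRinehart K A L) :
    Nonempty (SchoutenBracket 𝓛) :=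
  exteriorAlgebra_schouten_gerstenhaber_general 𝓛
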